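/- Let q be a prime power and n ≥ 2 an integer with (n−1) dividing q²−1, and let k be an integer with 1 ≤ k ≤ ⌊(n+q−1)/(q+1)⌋. Then there exists an MDS Hermitian self-orthogonal [n,k]_{q²} code. Explicitly, writing {α_1,…,α_n} = {α ∈ 𝔽_{q²} : α^n = α} (a set of exactly n elements since (n−1) | q²−1), the value n·α_i^{n−1} − 1 lies in 𝔽_q^* for every i, and for any choice of v_i ∈ 𝔽_{q²}^* with v_i^{q+1}·(n·α_i^{n−1} − 1) = 1, the code {(v_1 f(α_1), …, v_n f(α_n)) : f ∈ 𝔽_{q²}[x], deg f ≤ k−1} is an MDS Hermitian self-orthogonal [n,k]_{q²} code. -/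

import Mathlib

/-!
The evaluation points are the `n` distinct roots of `h = X ^ n - X`, and `n αᵢ ^ (n - 1) - 1` is
`h'(αᵢ)`. It equals `-1` at `0` and `n - 1` elsewhere (`derivative_value`), hence is fixed by
`x ↦ x ^ q`, and it is nonzero because `n - 1` divides `q ^ 2 - 1`; so multipliers `vᵢ` with
`vᵢ ^ (q + 1) = h'(αᵢ)⁻¹` exist by surjectivity of the norm (`exists_pow_succ_eq`).

For codewords coming from `f` and `g`, the Hermitian product is `∑ (f g ^ q)(αᵢ) / h'(αᵢ)`. By
Lagrange interpolation such a sum is the coefficient of `X ^ (n - 1)` in `f g ^ q` as soon as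
this polynomial has degree below `n` (`sum_eval_div_derivative_eq_zero`). The bound on `k` says
exactly that `(k - 1)(q + 1) ≤ n - 2`, so the coefficient vanishes. Dimension and minimum
distance are the usual root count for generalized Reed–Solomon codes (`finrank_evalCode`,
`minDistEq_evalCode`).
-/

open scoped BigOperators

/-- A linear code `C ⊆ 𝔽_{q²}ⁿ` is Hermitian self-orthogonal if
`⟨c,c'⟩_H = ∑ i, c i * (c' i)^q = 0` for all codewords `c, c'`. -/
def IsHermSelfOrth (q : ℕ) {F : Type*} [Field F] {n : ℕ}
    (C : Submodule F (Fin n → F)) : Prop :=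
  ∀ c ∈ C, ∀ c' ∈ C, ∑ i, c i * (c' i) ^ q = 0

/-- The minimum Hamming distance of the code `C` equals `d`. -/
def MinDistEq {F : Type*} [Field F] {n : ℕ}
    (C : Submodule F (Fin n → F)) (d : ℕ) : Prop :=
  (∀ c ∈ C, c ≠ 0 → d ≤ Set.ncard {i | c i ≠ 0}) ∧
  (∃ c ∈ C, c ≠ 0 ∧ Set.ncard {i | c i ≠ 0} = d)

/-- The generalized Reed–Solomon evaluation code
`{(v₁ f(α₁), …, vₙ f(αₙ)) : f ∈ F[x], deg f ≤ k − 1}` (polynomials of degree `< k`). -/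
noncomputable def evalCode {F : Type*} [Field F] {n : ℕ} (k : ℕ)
    (α v : Fin n → F) : Submodule F (Fin n → F) :=
  Submodule.map
    (show Polynomial F →ₗ[F] (Fin n → F) from
      { toFun := fun f : Polynomial F => fun i => v i * Polynomial.eval (α i) f
        map_add' := fun f g => by funext i; simp [mul_add]
        map_smul' := fun c f => by
          funext i; simp [Polynomial.eval_smul, smul_eq_mul]; ring })
    (Polynomial.degreeLT F k)

open Polynomial

section HermitianGRS

variable {F : Type*} [Field F]

lemma mem_evalCode {n k : ℕ} {α v c : Fin n → F} :
    c ∈ evalCode k α v ↔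
      ∃ f : F[X], f.degree < k ∧ ∀ i, c i = v i * f.eval (α i) := by
  unfold evalCode
  rw [Submodule.mem_map]
  constructor
  · rintro ⟨f, hf, rfl⟩
    exact ⟨f, mem_degreeLT.1 hf, fun i => rfl⟩
  · rintro ⟨f, hf, h⟩
    exact ⟨f, mem_degreeLT.2 hf, funext fun i => (h i).symm⟩

/-- The evaluation map is injective on polynomials of degree less than `k ≤ n`, since a nonzero
one has fewer than `n` roots. -/
lemma finrank_evalCode {n k : ℕ} (hkn : k ≤ n) {α v : Fin n → F}
    (hα : Function.Injective α) (hv : ∀ i, v i ≠ 0) :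
    Module.finrank F (evalCode k α v) = k := by
  unfold evalCode
  rw [← LinearMap.range_domRestrict, LinearMap.finrank_range_of_inj]
  · rw [(degreeLTEquiv F k).finrank_eq, Module.finrank_fin_fun]
  · rw [← LinearMap.ker_eq_bot, LinearMap.ker_eq_bot']
    rintro ⟨f, hf⟩ hker
    have hdeg : f.degree < (Finset.univ : Finset (Fin n)).card := by
      rw [Finset.card_univ, Fintype.card_fin]
      exact (mem_degreeLT.1 hf).trans_le (by exact_mod_cast hkn)
    refine Subtype.ext (eq_zero_of_degree_lt_of_eval_index_eq_zero _ hα.injOn hdeg fun i _ => ?_)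
    have hi : v i * f.eval (α i) = 0 := congrFun hker i
    exact (mul_eq_zero.1 hi).resolve_left (hv i)

/-- Weight plus number of zero coordinates equals the length. -/
lemma ncard_support_add {n : ℕ} [DecidableEq F] (c : Fin n → F) :
    Set.ncard {i | c i ≠ 0} + (Finset.univ.filter fun i => c i = 0).card = n := by
  have h : {i | c i ≠ 0} = ((Finset.univ.filter fun i => ¬ c i = 0 : Finset (Fin n)) : Set _) := by
    ext; simp
  rw [h, Set.ncard_coe_finset, add_comm, Finset.card_filter_add_card_filter_not,
    Finset.card_univ, Fintype.card_fin]

/-- Generalized Reed–Solomon codes are MDS: a nonzero polynomial of degree less than `k` vanishes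
at no more than `k - 1` of the nodes, and the product of `k - 1` linear factors attains this. -/
lemma minDistEq_evalCode {n k : ℕ} (hk1 : 1 ≤ k) (hkn : k ≤ n) {α v : Fin n → F}
    (hα : Function.Injective α) (hv : ∀ i, v i ≠ 0) :
    MinDistEq (evalCode k α v) (n - k + 1) := by
  classical
  constructor
  · intro c hc hc0
    obtain ⟨f, hf, hcf⟩ := mem_evalCode.1 hc
    have hz : (Finset.univ.filter fun i => c i = 0).card < k := by
      by_contra! hle
      apply hc0
      have hf0 : f = 0 := by
        refine eq_zero_of_degree_lt_of_eval_index_eq_zero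
          (Finset.univ.filter fun i => c i = 0) hα.injOn
          (hf.trans_le (by exact_mod_cast hle)) fun i hi => ?_
        have hi0 := (Finset.mem_filter.1 hi).2
        rw [hcf] at hi0
        exact (mul_eq_zero.1 hi0).resolve_left (hv i)
      funext i
      rw [hcf, hf0]
      simp
    have := ncard_support_add c
    omega
  · obtain ⟨s, -, hs⟩ := Finset.exists_subset_card_eq
      (s := (Finset.univ : Finset (Fin n))) (n := k - 1) (by simp; omega)
    set c : Fin n → F := fun i => v i * (Lagrange.nodal s α).eval (α i) with hc
    have hz : (Finset.univ.filter fun i => c i = 0) = s := by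
      ext i
      simp only [hc, Finset.mem_filter, Finset.mem_univ, true_and, mul_eq_zero, hv i, false_or,
        Lagrange.eval_nodal, Finset.prod_eq_zero_iff, sub_eq_zero]
      exact ⟨fun ⟨j, hj, h⟩ => hα h ▸ hj, fun h => ⟨i, h, rfl⟩⟩
    have hw := ncard_support_add c
    rw [hz, hs] at hw
    refine ⟨c, mem_evalCode.2 ⟨Lagrange.nodal s α, ?_, fun i => rfl⟩, ?_, by omega⟩
    · rw [Lagrange.degree_nodal, hs]
      exact_mod_cast (by omega : k - 1 < k)
    · intro h0
      rw [h0] at hw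
      simp at hw
      omega

/-- Since `X ^ n - X` is monic of degree `n`, having `n` distinct roots determines it as their
nodal polynomial. -/
lemma nodal_eq_X_pow_sub_X {n : ℕ} (hn : 2 ≤ n) {α : Fin n → F}
    (hα : Function.Injective α) (hroot : ∀ i, α i ^ n = α i) :
    Lagrange.nodal Finset.univ α = X ^ n - X := by
  have hlt : (X : F[X]).degree < (X ^ n : F[X]).degree := by
    rw [degree_X_pow, degree_X]
    exact_mod_cast hn
  have hd : (X ^ n - X : F[X]).degree = n := by
    rw [degree_sub_eq_left_of_degree_lt hlt, degree_X_pow]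
  refine eq_of_degree_le_of_eval_index_eq Finset.univ hα.injOn ?_ ?_ ?_ ?_
  · rw [Lagrange.degree_nodal]
  · rw [Lagrange.degree_nodal, hd]; simp
  · rw [Lagrange.nodal_monic.leadingCoeff, leadingCoeff_sub_of_degree_lt hlt,
      (monic_X_pow n).leadingCoeff]
  · intro i hi
    rw [Lagrange.eval_nodal_at_node hi]
    simp [hroot i]

/-- Euler's identity `∑ P(αᵢ) / h'(αᵢ) = 0` for `h = X ^ n - X` and `deg P < n - 1`: the sum is
the coefficient of `X ^ (n - 1)` in the Lagrange interpolation of `P` at the roots of `h`. -/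
lemma sum_eval_div_derivative_eq_zero {n : ℕ} (hn : 2 ≤ n) {α : Fin n → F}
    (hα : Function.Injective α) (hroot : ∀ i, α i ^ n = α i)
    (P : F[X]) (hP : P.degree < (n - 1 : ℕ)) :
    ∑ i, P.eval (α i) / ((n : F) * α i ^ (n - 1) - 1) = 0 := by
  have hcard : (Finset.univ : Finset (Fin n)).card = n := by simp
  have h := Lagrange.coeff_eq_sum (s := Finset.univ) (v := α) hα.injOn (P := P)
    (hP.trans_le (by rw [hcard]; exact_mod_cast Nat.sub_le n 1))
  rw [hcard, coeff_eq_zero_of_degree_lt hP] at h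
  rw [h]
  refine Finset.sum_congr rfl fun i hi => ?_
  rw [← Lagrange.eval_nodal, ← Lagrange.eval_nodal_derivative_eval_node_eq hi,
    nodal_eq_X_pow_sub_X hn hα hroot]
  simp [derivative_X_pow]

/-- The product of a codeword with the `q`-th power of another is, coordinatewise,
`(f g ^ q)(αᵢ) / h'(αᵢ)`, and `deg (f g ^ q) ≤ (k - 1)(q + 1) ≤ n - 2`. -/
lemma isHermSelfOrth_evalCode {q n k : ℕ} (hn : 2 ≤ n) (hk1 : 1 ≤ k)
    (hk2 : k * (q + 1) ≤ n + q - 1) {α v : Fin n → F}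
    (hα : Function.Injective α) (hroot : ∀ i, α i ^ n = α i)
    (hv : ∀ i, v i ^ (q + 1) * ((n : F) * α i ^ (n - 1) - 1) = 1) :
    IsHermSelfOrth q (evalCode k α v) := by
  intro c hc c' hc'
  obtain ⟨f, hf, hcf⟩ := mem_evalCode.1 hc
  obtain ⟨g, hg, hcg⟩ := mem_evalCode.1 hc'
  rw [← sum_eval_div_derivative_eq_zero hn hα hroot (f * g ^ q)]
  · refine Finset.sum_congr rfl fun i _ => ?_
    have hne : (n : F) * α i ^ (n - 1) - 1 ≠ 0 := right_ne_zero_of_mul_eq_one (hv i)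
    rw [eq_div_iff hne, hcf, hcg, eval_mul, eval_pow]
    linear_combination (f.eval (α i) * g.eval (α i) ^ q) * hv i
  · have hnat : ∀ p : F[X], p.degree < k → p.natDegree ≤ k - 1 := by
      intro p hp
      by_cases hp0 : p = 0
      · simp [hp0]
      · have := (natDegree_lt_iff_degree_lt hp0).2 hp
        omega
    have h1 : (f * g ^ q).natDegree ≤ (k - 1) + q * (k - 1) :=
      natDegree_mul_le_of_le (hnat f hf) (natDegree_pow_le_of_le q (hnat g hg))
    obtain ⟨m, rfl⟩ : ∃ m, k = m + 1 := ⟨k - 1, by omega⟩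
    have h2 : m + q * m < n - 1 := by
      have : (m + 1) * (q + 1) = m + q * m + q + 1 := by ring
      omega
    refine (degree_le_of_natDegree_le h1).trans_lt ?_
    exact_mod_cast h2

variable [Fintype F]

/-- Over a field with `q ^ 2` elements, `x ↦ x ^ q` is a ring endomorphism. -/
lemma exists_ringHom_pow {q : ℕ} (hq : IsPrimePow q) (hF : Fintype.card F = q ^ 2) :
    ∃ φ : F →+* F, ∀ x, φ x = x ^ q := by
  obtain ⟨p, r, hp, hr, rfl⟩ := hq
  have hp' : p.Prime := hp.nat_prime
  have := Fact.mk hp'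
  have h0 : (p : F) = 0 := by
    have h : ((Fintype.card F : ℕ) : F) = 0 := FiniteField.cast_card_eq_zero F
    rw [hF] at h
    push_cast at h
    exact pow_eq_zero_iff hr.ne' |>.1 (pow_eq_zero_iff two_ne_zero |>.1 h)
  have : CharP F p := (CharP.charP_iff_prime_eq_zero hp').2 h0
  exact ⟨iterateFrobenius F p r, fun x => iterateFrobenius_def p r x⟩

/-- The derivative of `X ^ n - X` at a root: it equals `-1` at `0` and `n - 1` elsewhere, and
`n - 1` is prime to the characteristic because it divides `q ^ 2 - 1`. -/
lemma derivative_value {q n : ℕ} (hq : IsPrimePow q) (hF : Fintype.card F = q ^ 2)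
    (hn : 2 ≤ n) (hdvd : (n - 1) ∣ q ^ 2 - 1) {a : F} (ha : a ^ n = a) :
    ((n : F) * a ^ (n - 1) - 1) ^ q = (n : F) * a ^ (n - 1) - 1 ∧
      (n : F) * a ^ (n - 1) - 1 ≠ 0 := by
  obtain ⟨φ, hφ⟩ := exists_ringHom_pow hq hF
  obtain ⟨m, rfl⟩ : ∃ m, n = m + 1 := ⟨n - 1, by omega⟩
  rw [Nat.add_sub_cancel] at *
  by_cases h0 : a = 0
  · subst h0
    rw [zero_pow (by omega), ← hφ]
    simp
  · have h1 : a ^ m = 1 := by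
      rw [pow_succ] at ha
      exact mul_right_cancel₀ h0 (by rw [ha, one_mul])
    rw [h1, ← hφ]
    refine ⟨by simp, fun h => ?_⟩
    have hm : (m : F) = 0 := by simpa using h
    obtain ⟨d, hd⟩ := hdvd
    have hq1 : 1 ≤ q ^ 2 := Nat.one_le_pow _ _ hq.pos
    have hsq : q ^ 2 = m * d + 1 := by omega
    have hc : ((Fintype.card F : ℕ) : F) = 0 := FiniteField.cast_card_eq_zero F
    rw [hF, hsq] at hc
    simp [hm] at hc

/-- The solutions are `0` together with the `n - 1` roots of unity of order dividing `n - 1`,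
all of which lie in the cyclic group `Fˣ` of order `q ^ 2 - 1`. -/
lemma ncard_pow_eq_self {q n : ℕ} (hF : Fintype.card F = q ^ 2)
    (hn : 2 ≤ n) (hdvd : (n - 1) ∣ q ^ 2 - 1) :
    Set.ncard {x : F | x ^ n = x} = n := by
  classical
  obtain ⟨m, rfl⟩ : ∃ m, n = m + 1 := ⟨n - 1, by omega⟩
  rw [Nat.add_sub_cancel] at hdvd
  obtain ⟨g, hg⟩ := IsCyclic.exists_ofOrder_eq_natCard (α := Fˣ)
  rw [Nat.card_eq_fintype_card, Fintype.card_units, hF] at hg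
  obtain ⟨d, hd⟩ := hdvd
  have hpos : 0 < q ^ 2 - 1 := hg ▸ orderOf_pos g
  have hprim : IsPrimitiveRoot ((g : F)) (q ^ 2 - 1) := by
    rw [← hg, ← orderOf_units]
    exact IsPrimitiveRoot.orderOf _
  have hprim' : IsPrimitiveRoot ((g : F) ^ d) m := hprim.pow hpos (by rw [hd, mul_comm])
  have hset : {x : F | x ^ (m + 1) = x} =
      ((insert 0 (nthRootsFinset m (1 : F)) : Finset F) : Set F) := by
    ext x
    simp only [Set.mem_ofPred_eq, Finset.coe_insert, Set.mem_insert_iff, Finset.mem_coe]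
    rw [mem_nthRootsFinset (by omega), pow_succ]
    by_cases hx : x = 0
    · simp [hx]
    · simp [hx]
  rw [hset, Set.ncard_coe_finset, Finset.card_insert_of_notMem, hprim'.card_nthRootsFinset]
  rw [mem_nthRootsFinset (by omega), zero_pow (by omega)]
  exact zero_ne_one

/-- Surjectivity of the norm `x ↦ x ^ (q + 1)` onto the nonzero elements of the subfield of order
`q`. -/
lemma exists_pow_succ_eq {q : ℕ} (hq : 0 < q) (hF : Fintype.card F = q ^ 2) {c : F}
    (hc0 : c ≠ 0) (hc : c ^ q = c) : ∃ v : F, v ^ (q + 1) = c := by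
  classical
  obtain ⟨g, hg⟩ := IsCyclic.exists_generator (α := Fˣ)
  have ho : orderOf g = q ^ 2 - 1 := by
    rw [orderOf_eq_card_of_forall_mem_zpowers hg, Nat.card_eq_fintype_card, Fintype.card_units, hF]
  have hpos : 0 < q ^ 2 - 1 := ho ▸ orderOf_pos g
  obtain ⟨j, hj⟩ := (mem_powers_iff_mem_zpowers.2 (hg (Units.mk0 c hc0)))
  replace hj : g ^ j = Units.mk0 c hc0 := hj
  obtain ⟨r, rfl⟩ : ∃ r, q = r + 1 := ⟨q - 1, by omega⟩
  have hsq : (r + 1) ^ 2 - 1 = (r + 1 + 1) * r := by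
    have : (r + 1) ^ 2 = (r + 1 + 1) * r + 1 := by ring
    omega
  have hr : 0 < r := by
    rw [hsq] at hpos
    exact Nat.pos_of_mul_pos_left hpos
  have h1 : g ^ (j * r) = 1 := by
    rw [pow_mul, hj]
    ext
    rw [pow_succ] at hc
    simpa using mul_right_cancel₀ hc0 (hc.trans (one_mul c).symm)
  have hdiv := orderOf_dvd_of_pow_eq_one h1
  rw [ho, hsq] at hdiv
  obtain ⟨t, rfl⟩ := Nat.dvd_of_mul_dvd_mul_right hr hdiv
  refine ⟨((g ^ t : Fˣ) : F), ?_⟩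
  rw [← Units.val_pow_eq_pow_val, ← pow_mul, mul_comm, hj]
  rfl

end HermitianGRS

/-- For `(n−1) ∣ q²−1` and `1 ≤ k ≤ ⌊(n+q−1)/(q+1)⌋` there is an MDS Hermitian
self-orthogonal `[n,k]_{q²}` code; explicitly, on the `n` evaluation points
`{α : α^n = α}` one has `n·αᵢ^{n−1} − 1 ∈ 𝔽_q^*`, and for any `vᵢ` with
`vᵢ^{q+1}(n·αᵢ^{n−1} − 1) = 1` the corresponding GRS code works. -/
theorem stmt5 (q : ℕ) (hq : IsPrimePow q)
    (F : Type*) [Field F] [Fintype F] (hF : Fintype.card F = q ^ 2)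
    (n : ℕ) (hn : 2 ≤ n) (hdvd : (n - 1) ∣ q ^ 2 - 1)
    (k : ℕ) (hk1 : 1 ≤ k) (hk2 : k ≤ (n + q - 1) / (q + 1)) :
    (∃ C : Submodule F (Fin n → F),
      Module.finrank F C = k ∧ IsHermSelfOrth q C ∧ MinDistEq C (n - k + 1)) ∧
    Set.ncard {x : F | x ^ n = x} = n ∧
    (∀ α : Fin n → F, Function.Injective α →
      Set.range α = {x : F | x ^ n = x} →
      (∀ i, ((n : F) * α i ^ (n - 1) - 1) ^ q = (n : F) * α i ^ (n - 1) - 1 ∧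
        (n : F) * α i ^ (n - 1) - 1 ≠ 0) ∧
      (∀ v : Fin n → F, (∀ i, v i ≠ 0) →
        (∀ i, v i ^ (q + 1) * ((n : F) * α i ^ (n - 1) - 1) = 1) →
        Module.finrank F (evalCode k α v) = k ∧
        IsHermSelfOrth q (evalCode k α v) ∧
        MinDistEq (evalCode k α v) (n - k + 1))) := by
  have hq0 : 0 < q := hq.pos
  have hk3 : k * (q + 1) ≤ n + q - 1 := (Nat.le_div_iff_mul_le (by omega)).1 hk2
  have hkn : k ≤ n := by
    by_contra! h
    have : (n + 1) * (q + 1) ≤ k * (q + 1) := Nat.mul_le_mul_right _ h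
    have : (n + 1) * (q + 1) = n * q + n + q + 1 := by ring
    omega
  have hcard := ncard_pow_eq_self hF hn hdvd
  have main : ∀ α : Fin n → F, Function.Injective α → (∀ i, α i ^ n = α i) →
      ∀ v : Fin n → F, (∀ i, v i ≠ 0) →
        (∀ i, v i ^ (q + 1) * ((n : F) * α i ^ (n - 1) - 1) = 1) →
        Module.finrank F (evalCode k α v) = k ∧
        IsHermSelfOrth q (evalCode k α v) ∧
        MinDistEq (evalCode k α v) (n - k + 1) := fun α hα hroot v hv hv1 =>
    ⟨finrank_evalCode hkn hα hv, isHermSelfOrth_evalCode hn hk1 hk3 hα hroot hv1,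
      minDistEq_evalCode hk1 hkn hα hv⟩
  refine ⟨?_, hcard, fun α hα hrange => ?_⟩
  · have e : Fin n ≃ {x : F | x ^ n = x} :=
      (Finite.equivFinOfCardEq (by rw [Nat.card_coe_set_eq, hcard])).symm
    have hroot : ∀ i, ((e i : F)) ^ n = e i := fun i => (e i).2
    have hex : ∀ i, ∃ w : F, w ^ (q + 1) = ((n : F) * (e i : F) ^ (n - 1) - 1)⁻¹ := fun i => by
      obtain ⟨h1, h2⟩ := derivative_value hq hF hn hdvd (hroot i)
      exact exists_pow_succ_eq hq0 hF (inv_ne_zero h2) (by rw [inv_pow, h1])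
    choose v hv using hex
    have hv1 : ∀ i, v i ^ (q + 1) * ((n : F) * (e i : F) ^ (n - 1) - 1) = 1 := fun i => by
      rw [hv, inv_mul_cancel₀ (derivative_value hq hF hn hdvd (hroot i)).2]
    have hv0 : ∀ i, v i ≠ 0 := fun i h => by
      have := hv1 i
      rw [h, zero_pow (by omega), zero_mul] at this
      exact zero_ne_one this
    exact ⟨_, main (fun i => (e i : F)) (Subtype.val_injective.comp e.injective) hroot v hv0 hv1⟩
  · have hroot : ∀ i, α i ^ n = α i := fun i => by
      have : α i ∈ Set.range α := ⟨i, rfl⟩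
      rwa [hrange] at this
    exact ⟨fun i => derivative_value hq hF hn hdvd (hroot i), main α hα hroot⟩
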